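/- Let Φ ⊆ ℝ^m be a nonempty closed convex set, ρ > 0, L ≥ 0, and let V : ℝ^m → ℝ be continuous, ρ-weakly convex on Φ, and bounded below on Φ. Let ε̄ > 0 be a target accuracy. Suppose the subproblem accuracy satisfies ε ≤ ε̄²/(8ρ) and the iteration count satisfies K ≥ 16(V_{1/2ρ}(φ₀) − inf_{φ∈Φ} V(φ) + ρL²)² / ε̄⁴. If φ₀ ∈ Φ and for k = 0, …, K−1 there are ζ_k ∈ ℝ^m with ‖ζ_k‖ ≤ L such that V(φ) ≥ V(φ_k) − ε + ⟨ζ_k, φ − φ_k⟩ − (ρ/2)‖φ − φ_k‖² for all φ ∈ Φ, and φ_{k+1} := proj_Φ(φ_k − ζ_k/√K), then there exists k ∈ {0, …, K−1} with ‖2ρ(φ_k − prox_{V/2ρ}(φ_k))‖ ≤ ε̄. -/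

import Mathlib

open scoped RealInnerProductSpace

/-!
The Moreau envelope of `V` serves as a Lyapunov function. With `p` the proximal point of the current
iterate `x`, the objective `V + ρ‖x - ·‖²` is `ρ`-strongly convex, so
`V x - V p ≥ (3/2) ρ ‖x - p‖²`; inserted into the inexact subgradient inequality at `p`, this makes
the subgradient correlate with `x - p` up to the error `ε`. Testing the envelope at the next iterate
against the old proximal point `p` then shows that each step decreases it by a multiple of the
squared envelope gradient, up to errors in `ε` and `L`. Telescoping bounds the mean of the squared
gradients, hence the smallest one.
-/

section StrongConvexity

open Set Filter Topology

lemma norm_smul_add_smul_sq {E : Type*} [NormedAddCommGroup E] [InnerProductSpace ℝ E] {a b : ℝ}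
    (hab : a + b = 1) (u v : E) :
    ‖a • u + b • v‖ ^ 2 = a * ‖u‖ ^ 2 + b * ‖v‖ ^ 2 - a * b * ‖u - v‖ ^ 2 := by
  rw [norm_add_sq_real, norm_sub_sq_real, norm_smul, norm_smul, mul_pow, mul_pow,
    real_inner_smul_left, real_inner_smul_right, Real.norm_eq_abs, Real.norm_eq_abs, sq_abs, sq_abs]
  obtain rfl := eq_sub_of_add_eq hab
  ring

lemma add_half_mul_norm_sq_le_of_isMinOn {E : Type*} [NormedAddCommGroup E] [NormedSpace ℝ E]
    {s : Set E} {f : E → ℝ} {μ : ℝ} {x y : E} (hf : StrongConvexOn s μ f) (hx : x ∈ s)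
    (hmin : IsMinOn f s x) (hy : y ∈ s) : f x + μ / 2 * ‖y - x‖ ^ 2 ≤ f y := by
  have hsegment : ∀ t ∈ Ioo (0 : ℝ) 1, f x + (1 - t) * (μ / 2 * ‖y - x‖ ^ 2) ≤ f y := by
    rintro t ⟨ht₀, ht₁⟩
    have hmem : t • y + (1 - t) • x ∈ s :=
      hf.1 hy hx ht₀.le (sub_nonneg.2 ht₁.le) (add_sub_cancel t 1)
    have hle := (isMinOn_iff.1 hmin _ hmem).trans
      (hf.2 hy hx ht₀.le (sub_nonneg.2 ht₁.le) (add_sub_cancel t 1))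
    simp only [smul_eq_mul] at hle
    refine le_of_mul_le_mul_left ?_ ht₀
    linarith
  have hlim : Tendsto (fun t : ℝ ↦ f x + (1 - t) * (μ / 2 * ‖y - x‖ ^ 2)) (𝓝[>] 0)
      (𝓝 (f x + μ / 2 * ‖y - x‖ ^ 2)) := by
    refine Tendsto.mono_left (Continuous.tendsto' (by fun_prop) _ _ ?_) nhdsWithin_le_nhds
    ring
  exact le_of_tendsto hlim (eventually_of_mem (Ioo_mem_nhdsGT one_pos) hsegment)

lemma strongConvexOn_neg_of_weaklyConvex {E : Type*} [NormedAddCommGroup E] [NormedSpace ℝ E]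
    {s : Set E} {f : E → ℝ} {ρ : ℝ} (hs : Convex ℝ s)
    (hf : ∀ x ∈ s, ∀ y ∈ s, ∀ τ ∈ Icc (0 : ℝ) 1, f (τ • x + (1 - τ) • y) ≤
      τ * f x + (1 - τ) * f y + ρ * τ * (1 - τ) / 2 * ‖x - y‖ ^ 2) :
    StrongConvexOn s (-ρ) f := by
  refine ⟨hs, fun x hx y hy a b ha hb hab ↦ ?_⟩
  obtain rfl := eq_sub_of_add_eq' hab
  have h := hf x hx y hy a ⟨ha, sub_nonneg.1 hb⟩
  simp only [smul_eq_mul]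
  linarith

end StrongConvexity

section Proximal

open Set

/-- The objective `V + ρ‖ψ - ·‖²` of the proximal step at `ψ`. -/
def proximalObjective {E : Type*} [NormedAddCommGroup E] (V : E → ℝ) (ρ : ℝ) (ψ y : E) : ℝ :=
  V y + ρ * ‖ψ - y‖ ^ 2

/-- The Moreau envelope of `V` restricted to `Φ`, written `V_{1/2ρ}` in the literature. As a real
infimum it is meaningful when `Φ` is nonempty and the objective is bounded below on `Φ`. -/
noncomputable def moreauEnvelope {E : Type*} [NormedAddCommGroup E] (Φ : Set E) (V : E → ℝ) (ρ : ℝ)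
    (ψ : E) : ℝ :=
  ⨅ y : Φ, proximalObjective V ρ ψ y

/-- The point `p` is a proximal point `prox_{V/2ρ}(ψ)` of `V` over `Φ`, so that `2ρ(ψ - p)` plays
the role of the gradient of the Moreau envelope at `ψ`. -/
structure IsProx {E : Type*} [NormedAddCommGroup E] (Φ : Set E) (V : E → ℝ) (ρ : ℝ) (ψ p : E) :
    Prop where
  mem : p ∈ Φ
  isMinOn : IsMinOn (proximalObjective V ρ ψ) Φ p

section Normed

variable {E : Type*} [NormedAddCommGroup E] {Φ : Set E} {V : E → ℝ} {ρ : ℝ} {ψ p y : E}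

lemma IsProx.moreauEnvelope_eq (hp : IsProx Φ V ρ ψ p) :
    moreauEnvelope Φ V ρ ψ = V p + ρ * ‖ψ - p‖ ^ 2 :=
  hp.isMinOn.iInf_eq hp.mem

lemma sInf_image_le_proximalObjective (hbdd : BddBelow (V '' Φ)) (hρ : 0 ≤ ρ) (hy : y ∈ Φ) :
    sInf (V '' Φ) ≤ proximalObjective V ρ ψ y :=
  (csInf_le hbdd (mem_image_of_mem V hy)).trans (le_add_of_nonneg_right (by positivity))

lemma moreauEnvelope_le (hbdd : BddBelow (V '' Φ)) (hρ : 0 ≤ ρ) (hy : y ∈ Φ) :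
    moreauEnvelope Φ V ρ ψ ≤ V y + ρ * ‖ψ - y‖ ^ 2 :=
  ciInf_le (f := fun y : Φ ↦ proximalObjective V ρ ψ y)
    ⟨sInf (V '' Φ), forall_mem_range.2 fun z ↦ sInf_image_le_proximalObjective hbdd hρ z.2⟩ ⟨y, hy⟩

lemma sInf_image_le_moreauEnvelope (hne : Φ.Nonempty) (hbdd : BddBelow (V '' Φ)) (hρ : 0 ≤ ρ) :
    sInf (V '' Φ) ≤ moreauEnvelope Φ V ρ ψ :=
  have := hne.to_subtype
  le_ciInf fun z ↦ sInf_image_le_proximalObjective hbdd hρ z.2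

end Normed

variable {E : Type*} [NormedAddCommGroup E] [InnerProductSpace ℝ E] {Φ : Set E} {V : E → ℝ}
  {μ ρ : ℝ} {ψ p q y z : E}

lemma strongConvexOn_proximalObjective (hV : StrongConvexOn Φ μ V) :
    StrongConvexOn Φ (μ + 2 * ρ) (proximalObjective V ρ ψ) := by
  refine ⟨hV.1, fun x hx y hy a b ha hb hab ↦ ?_⟩
  have hcomb : ψ - (a • x + b • y) = a • (ψ - x) + b • (ψ - y) := by
    obtain rfl := eq_sub_of_add_eq hab
    module
  have hsq := norm_smul_add_smul_sq hab (ψ - x) (ψ - y)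
  rw [← hcomb, sub_sub_sub_cancel_left, norm_sub_rev y] at hsq
  have hVxy := hV.2 hx hy ha hb hab
  simp only [proximalObjective, smul_eq_mul] at hVxy ⊢
  rw [hsq]
  linarith

lemma IsProx.add_mul_norm_sq_le (hp : IsProx Φ V ρ ψ p) (hV : StrongConvexOn Φ μ V) (hψ : ψ ∈ Φ) :
    V p + (μ / 2 + 2 * ρ) * ‖ψ - p‖ ^ 2 ≤ V ψ := by
  have h := add_half_mul_norm_sq_le_of_isMinOn (strongConvexOn_proximalObjective hV) hp.mem
    hp.isMinOn hψ
  simp only [proximalObjective, sub_self, norm_zero] at h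
  linarith

lemma norm_sq_add_norm_sq_le_of_isMinOn_norm_sub (hΦ : Convex ℝ Φ) (hq : q ∈ Φ)
    (hmin : IsMinOn (fun w ↦ ‖w - z‖) Φ q) (hy : y ∈ Φ) :
    ‖z - q‖ ^ 2 + ‖y - q‖ ^ 2 ≤ ‖z - y‖ ^ 2 := by
  -- A projection is a proximal point of the zero function.
  have hminSq : IsMinOn (proximalObjective 0 1 z) Φ q := isMinOn_iff.2 fun w hw ↦ by
    have hle : ‖z - q‖ ≤ ‖z - w‖ := by
      simpa only [norm_sub_rev z] using isMinOn_iff.1 hmin w hw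
    simpa only [proximalObjective, Pi.zero_apply, zero_add, one_mul] using
      pow_le_pow_left₀ (norm_nonneg _) hle 2
  have hzero : StrongConvexOn Φ 0 (0 : E → ℝ) := strongConvexOn_zero.2 (convexOn_const 0 hΦ)
  have h := add_half_mul_norm_sq_le_of_isMinOn (strongConvexOn_proximalObjective hzero) hq hminSq hy
  simp only [proximalObjective, Pi.zero_apply] at h
  linarith

end Proximal

section SubgradientMethod

variable {E : Type*} [NormedAddCommGroup E] [InnerProductSpace ℝ E]

/-- One step, from `x` to `y`, of the projected subgradient method with step size `a`: the direction
`ζ` is a subgradient of norm at most `L` of the `ρ`-weakly convex `V` at `x`, up to an additive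
error `ε`, and `y` is a projection of `x - a • ζ` onto `Φ`. -/
structure IsInexactSubgradientStep (Φ : Set E) (V : E → ℝ) (ρ L ε a : ℝ) (x ζ y : E) : Prop where
  norm_le : ‖ζ‖ ≤ L
  subgradient : ∀ ψ ∈ Φ, V x - ε + ⟪ζ, ψ - x⟫ - ρ / 2 * ‖ψ - x‖ ^ 2 ≤ V ψ
  mem : y ∈ Φ
  isMinOn : IsMinOn (fun w ↦ ‖w - (x - a • ζ)‖) Φ y

namespace IsInexactSubgradientStep

variable {Φ : Set E} {V : E → ℝ} {ρ L ε a : ℝ} {x ζ y p w : E}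

lemma norm_sub_sq_le (h : IsInexactSubgradientStep Φ V ρ L ε a x ζ y) (hΦ : Convex ℝ Φ)
    (hw : w ∈ Φ) :
    ‖y - w‖ ^ 2 ≤ ‖x - w‖ ^ 2 - 2 * a * ⟪ζ, x - w⟫ + a ^ 2 * L ^ 2 := by
  have hζ : ‖ζ‖ ^ 2 ≤ L ^ 2 := pow_le_pow_left₀ (norm_nonneg ζ) h.norm_le 2
  calc ‖y - w‖ ^ 2 ≤ ‖x - a • ζ - w‖ ^ 2 := by
        rw [norm_sub_rev y]
        linarith [norm_sq_add_norm_sq_le_of_isMinOn_norm_sub hΦ h.mem h.isMinOn hw,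
          sq_nonneg ‖x - a • ζ - y‖]
    _ = ‖x - w‖ ^ 2 - 2 * a * ⟪ζ, x - w⟫ + a ^ 2 * ‖ζ‖ ^ 2 := by
        rw [sub_right_comm, norm_sub_sq_real, norm_smul, mul_pow, Real.norm_eq_abs, sq_abs,
          real_inner_smul_right, real_inner_comm]
        ring
    _ ≤ ‖x - w‖ ^ 2 - 2 * a * ⟪ζ, x - w⟫ + a ^ 2 * L ^ 2 := by gcongr

lemma mul_norm_sq_sub_le_inner (h : IsInexactSubgradientStep Φ V ρ L ε a x ζ y)
    (hV : StrongConvexOn Φ (-ρ) V) (hx : x ∈ Φ) (hp : IsProx Φ V ρ x p) :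
    ρ * ‖x - p‖ ^ 2 - ε ≤ ⟪ζ, x - p⟫ := by
  have hgap := hp.add_mul_norm_sq_le hV hx
  have hsub := h.subgradient p hp.mem
  rw [← neg_sub x p, inner_neg_right, norm_neg] at hsub
  linarith

lemma norm_sq_le_moreauEnvelope_sub (h : IsInexactSubgradientStep Φ V ρ L ε a x ζ y)
    (hV : StrongConvexOn Φ (-ρ) V) (hbdd : BddBelow (V '' Φ)) (hρ : 0 ≤ ρ) (ha : 0 ≤ a)
    (hx : x ∈ Φ) (hp : IsProx Φ V ρ x p) :
    a / 2 * ‖(2 * ρ) • (x - p)‖ ^ 2 ≤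
      moreauEnvelope Φ V ρ x - moreauEnvelope Φ V ρ y + ρ * a * (2 * ε + a * L ^ 2) := by
  have henv : moreauEnvelope Φ V ρ y ≤ moreauEnvelope Φ V ρ x
      - 2 * ρ * a * (ρ * ‖x - p‖ ^ 2 - ε) + ρ * a ^ 2 * L ^ 2 := calc
    moreauEnvelope Φ V ρ y ≤ V p + ρ * ‖y - p‖ ^ 2 := moreauEnvelope_le hbdd hρ hp.mem
    _ ≤ V p + ρ * (‖x - p‖ ^ 2 - 2 * a * ⟪ζ, x - p⟫ + a ^ 2 * L ^ 2) := by
        gcongr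
        exact h.norm_sub_sq_le hV.1 hp.mem
    _ = moreauEnvelope Φ V ρ x - 2 * ρ * a * ⟪ζ, x - p⟫ + ρ * a ^ 2 * L ^ 2 := by
        rw [hp.moreauEnvelope_eq]
        ring
    _ ≤ _ := by
        gcongr
        exact h.mul_norm_sq_sub_le_inner hV hx hp
  rw [norm_smul, mul_pow, Real.norm_eq_abs, sq_abs]
  linarith

end IsInexactSubgradientStep

variable {Φ : Set E} {V : E → ℝ} {ρ L ε εbar a : ℝ} {K : ℕ} {φ ζ p : ℕ → E}

lemma mul_sum_norm_sq_le_of_isInexactSubgradientStep (hρ : 0 ≤ ρ) (ha : 0 ≤ a)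
    (hV : StrongConvexOn Φ (-ρ) V) (hbdd : BddBelow (V '' Φ)) (hφ₀ : φ 0 ∈ Φ)
    (hp : ∀ k < K, IsProx Φ V ρ (φ k) (p k))
    (hstep : ∀ k < K, IsInexactSubgradientStep Φ V ρ L ε a (φ k) (ζ k) (φ (k + 1))) :
    a / 2 * ∑ k ∈ Finset.range K, ‖(2 * ρ) • (φ k - p k)‖ ^ 2 ≤
      moreauEnvelope Φ V ρ (φ 0) - sInf (V '' Φ) + K * (ρ * a * (2 * ε + a * L ^ 2)) := by
  have hmem : ∀ k < K, φ k ∈ Φ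
    | 0, _ => hφ₀
    | k + 1, hk => (hstep k (Nat.lt_of_succ_lt hk)).mem
  have hinf : sInf (V '' Φ) ≤ moreauEnvelope Φ V ρ (φ K) :=
    sInf_image_le_moreauEnvelope ⟨φ 0, hφ₀⟩ hbdd hρ
  calc a / 2 * ∑ k ∈ Finset.range K, ‖(2 * ρ) • (φ k - p k)‖ ^ 2
      = ∑ k ∈ Finset.range K, a / 2 * ‖(2 * ρ) • (φ k - p k)‖ ^ 2 := Finset.mul_sum ..
    _ ≤ ∑ k ∈ Finset.range K, (moreauEnvelope Φ V ρ (φ k) - moreauEnvelope Φ V ρ (φ (k + 1))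
          + ρ * a * (2 * ε + a * L ^ 2)) := Finset.sum_le_sum fun k hk ↦
        have hk := Finset.mem_range.1 hk
        (hstep k hk).norm_sq_le_moreauEnvelope_sub hV hbdd hρ ha (hmem k hk) (hp k hk)
    _ = moreauEnvelope Φ V ρ (φ 0) - moreauEnvelope Φ V ρ (φ K)
          + K * (ρ * a * (2 * ε + a * L ^ 2)) := by
        rw [Finset.sum_add_distrib, Finset.sum_range_sub', Finset.sum_const, Finset.card_range,
          nsmul_eq_mul]
    _ ≤ _ := by gcongr

lemma sum_norm_sq_le_of_isInexactSubgradientStep (hρ : 0 ≤ ρ) (hK : 0 < K)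
    (hV : StrongConvexOn Φ (-ρ) V) (hbdd : BddBelow (V '' Φ)) (hφ₀ : φ 0 ∈ Φ)
    (hp : ∀ k < K, IsProx Φ V ρ (φ k) (p k))
    (hstep : ∀ k < K, IsInexactSubgradientStep Φ V ρ L ε (1 / √K) (φ k) (ζ k) (φ (k + 1))) :
    ∑ k ∈ Finset.range K, ‖(2 * ρ) • (φ k - p k)‖ ^ 2 ≤
      2 * √K * (moreauEnvelope Φ V ρ (φ 0) - sInf (V '' Φ) + ρ * L ^ 2) + 4 * K * (ρ * ε) := by
  have hsqrt : 0 < √(K : ℝ) := Real.sqrt_pos.2 (Nat.cast_pos.2 hK)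
  have hsq : √(K : ℝ) ^ 2 = K := Real.sq_sqrt K.cast_nonneg
  calc ∑ k ∈ Finset.range K, ‖(2 * ρ) • (φ k - p k)‖ ^ 2
      = 2 * √K * (1 / √K / 2 * ∑ k ∈ Finset.range K, ‖(2 * ρ) • (φ k - p k)‖ ^ 2) := by
        field_simp
    _ ≤ 2 * √K * (moreauEnvelope Φ V ρ (φ 0) - sInf (V '' Φ)
          + K * (ρ * (1 / √K) * (2 * ε + 1 / √K * L ^ 2))) := by
        gcongr
        exact mul_sum_norm_sq_le_of_isInexactSubgradientStep hρ (by positivity) hV hbdd hφ₀ hp hstep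
    _ = 2 * √K * (moreauEnvelope Φ V ρ (φ 0) - sInf (V '' Φ) + ρ * L ^ 2) + 4 * K * (ρ * ε) := by
        rw [← hsq, Real.sqrt_sq hsqrt.le]
        field_simp
        ring

theorem subgradient_max_oracle_complexity_general (hρ : 0 < ρ) (hεbar : 0 < εbar) (hK : 0 < K)
    (hV : StrongConvexOn Φ (-ρ) V) (hbdd : BddBelow (V '' Φ)) (hφ₀ : φ 0 ∈ Φ)
    (hp : ∀ k < K, IsProx Φ V ρ (φ k) (p k)) (hε : ε ≤ εbar ^ 2 / (8 * ρ))
    (hKbig : 16 * (moreauEnvelope Φ V ρ (φ 0) - sInf (V '' Φ) + ρ * L ^ 2) ^ 2 / εbar ^ 4 ≤ K)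
    (hstep : ∀ k < K, IsInexactSubgradientStep Φ V ρ L ε (1 / √K) (φ k) (ζ k) (φ (k + 1))) :
    ∃ k < K, ‖(2 * ρ) • (φ k - p k)‖ ≤ εbar := by
  set D := moreauEnvelope Φ V ρ (φ 0) - sInf (V '' Φ) + ρ * L ^ 2
  have hD : 4 * D / εbar ^ 2 ≤ √K := Real.le_sqrt_of_sq_le (hKbig.trans_eq' (by ring))
  rw [div_le_iff₀ (by positivity)] at hD
  have hρε : ρ * ε ≤ εbar ^ 2 / 8 := by
    rw [le_div_iff₀ (by positivity)] at hε
    linarith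
  have hsum : ∑ k ∈ Finset.range K, ‖(2 * ρ) • (φ k - p k)‖ ^ 2 ≤
      ∑ _k ∈ Finset.range K, εbar ^ 2 := calc
    _ ≤ 2 * √K * D + 4 * K * (ρ * ε) :=
        sum_norm_sq_le_of_isInexactSubgradientStep hρ.le hK hV hbdd hφ₀ hp hstep
    _ ≤ 2 * √K * (√K * εbar ^ 2 / 4) + 4 * K * (εbar ^ 2 / 8) := by
        gcongr
        linarith
    _ = (√K ^ 2 + K) * εbar ^ 2 / 2 := by ring
    _ = ∑ _k ∈ Finset.range K, εbar ^ 2 := by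
        rw [Real.sq_sqrt K.cast_nonneg, Finset.sum_const, Finset.card_range, nsmul_eq_mul]
        ring
  obtain ⟨k, hk, hle⟩ := Finset.exists_le_of_sum_le (Finset.nonempty_range_iff.2 hK.ne') hsum
  exact ⟨k, Finset.mem_range.1 hk, le_of_sq_le_sq hle hεbar.le⟩

end SubgradientMethod

/-- oracle complexity. If the subproblem accuracy satisfies ε ≤ ε̄²/(8ρ) and
K ≥ 16(V_{1/2ρ}(φ₀) − inf_Φ V + ρL²)²/ε̄⁴, then the inexact subgradient-max algorithm with
step size 1/√K produces an iterate with Moreau-envelope gradient norm at most ε̄. -/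
theorem subgradient_max_oracle_complexity {m : ℕ} (Φ : Set (EuclideanSpace ℝ (Fin m)))
    (hne : Φ.Nonempty) (hcl : IsClosed Φ) (hΦ : Convex ℝ Φ)
    (ρ L ε εbar : ℝ) (hρ : 0 < ρ) (hL : 0 ≤ L) (hε : 0 ≤ ε) (hεbar : 0 < εbar)
    (K : ℕ) (hK : 1 ≤ K)
    (V : EuclideanSpace ℝ (Fin m) → ℝ) (hcont : Continuous V)
    (hwc : ∀ x ∈ Φ, ∀ y ∈ Φ, ∀ τ ∈ Set.Icc (0:ℝ) 1,
      V (τ • x + (1 - τ) • y) ≤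
        τ * V x + (1 - τ) * V y + ρ * τ * (1 - τ) / 2 * ‖x - y‖ ^ 2)
    (hbdd : BddBelow (V '' Φ))
    (φ : ℕ → EuclideanSpace ℝ (Fin m)) (ζ : ℕ → EuclideanSpace ℝ (Fin m))
    (hφ0 : φ 0 ∈ Φ)
    (prox : EuclideanSpace ℝ (Fin m) → EuclideanSpace ℝ (Fin m))
    (hproxmem : ∀ ψ, prox ψ ∈ Φ)
    (hproxmin : ∀ ψ, ∀ y ∈ Φ,
      V (prox ψ) + ρ * ‖ψ - prox ψ‖ ^ 2 ≤ V y + ρ * ‖ψ - y‖ ^ 2)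
    (hεsmall : ε ≤ εbar ^ 2 / (8 * ρ))
    (hKbig : (K : ℝ) ≥
      16 * ((V (prox (φ 0)) + ρ * ‖φ 0 - prox (φ 0)‖ ^ 2) - sInf (V '' Φ) + ρ * L ^ 2) ^ 2 /
        εbar ^ 4)
    (hζnorm : ∀ k < K, ‖ζ k‖ ≤ L)
    (hsub : ∀ k < K, ∀ ψ ∈ Φ,
      V ψ ≥ V (φ k) - ε + ⟪ζ k, ψ - φ k⟫ - ρ / 2 * ‖ψ - φ k‖ ^ 2)
    (hproj : ∀ k < K, φ (k + 1) ∈ Φ ∧ ∀ y ∈ Φ,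
      ‖φ (k + 1) - (φ k - (1 / Real.sqrt K) • ζ k)‖ ≤
        ‖y - (φ k - (1 / Real.sqrt K) • ζ k)‖) :
    ∃ k < K, ‖(2 * ρ) • (φ k - prox (φ k))‖ ≤ εbar :=
  have hp (ψ) : IsProx Φ V ρ ψ (prox ψ) := ⟨hproxmem ψ, hproxmin ψ⟩
  subgradient_max_oracle_complexity_general hρ hεbar hK (strongConvexOn_neg_of_weaklyConvex hΦ hwc)
    hbdd hφ0 (fun k _ ↦ hp (φ k)) hεsmall ((hp (φ 0)).moreauEnvelope_eq ▸ hKbig)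
    fun k hk ↦ ⟨hζnorm k hk, hsub k hk, (hproj k hk).1, (hproj k hk).2⟩
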